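/- Assume each q_i is Lipschitz continuous and let f be the bounded fractal function. Define the Fourier-type transform f̂(s) = ∫_{x_0}^{x_N} e^{jsx} f(x) dx ∈ ℂ (j = √−1) and Q̂(s) = ∫_{x_0}^{x_N} e^{jsx} Q(x) dx, where Q(x) = q_i(L_i^{-1}(x)) for x ∈ I_i. Then for every real s, f̂(s) = ∑_{i=1}^N a_i α_i e^{j s b_i} f̂(a_i s) + Q̂(s). -/

import Mathlib

open Set

noncomputable def aC (x : ℕ → ℝ) (N i : ℕ) : ℝ := (x (i + 1) - x i) / (x N - x 0)

noncomputable def bC (x : ℕ → ℝ) (N i : ℕ) : ℝ := (x N * x i - x 0 * x (i + 1)) / (x N - x 0)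

/-- The affine map `L i t = a i * t + b i`. -/
noncomputable def Lm (x : ℕ → ℝ) (N i : ℕ) (t : ℝ) : ℝ := aC x N i * t + bC x N i

/-- The inverse `L i ⁻¹ t = (t - b i) / a i` of the affine map `L i`. -/
noncomputable def LmInv (x : ℕ → ℝ) (N i : ℕ) (t : ℝ) : ℝ := (t - bC x N i) / aC x N i

/-!
The partition cuts `∫ e^{jst} f(t) dt` into pieces, and the substitution `t = L_i u` turns the
`i`-th piece into `a_i e^{j s b_i} ∫ e^{j a_i s u} f(L_i u) du`. Inserting
`f(L_i u) = α_i f(u) + q_i(u)` splits off the asserted sum; what remains is the same decomposition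
of `Q̂(s)`, because `Q(L_i u) = q_i(u)`.

Splitting the integrals requires `f` to be integrable. Since `f` is bounded, only measurability is
at stake: if `f` is uniformly `ε`-close to a measurable function then, by the functional equation,
it is `cε`-close to one on every piece, where `c = max |α_i| < 1`. Iterating from `ε = sup |f|`
exhibits `f` as a limit of measurable functions.
-/

open MeasureTheory Filter Topology

section Approximation

variable {X E : Type*} [MeasurableSpace X] [NormedAddCommGroup E] {μ : Measure X} {s t : Set X}
  {f g q : X → E} {ε δ : ℝ}

/-- `f` is uniformly `ε`-close on `s` to an almost everywhere strongly measurable function. The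
fixed-point equation of a fractal function improves `ε` by a factor, and `ε → 0` yields
measurability. -/
def AEStronglyMeasurableUpTo (ε : ℝ) (f : X → E) (μ : Measure X) (s : Set X) : Prop :=
  ∃ g : X → E, AEStronglyMeasurable g (μ.restrict s) ∧ ∀ u ∈ s, ‖f u - g u‖ ≤ ε

namespace AEStronglyMeasurableUpTo

lemma of_norm_le (hf : ∀ u ∈ s, ‖f u‖ ≤ ε) : AEStronglyMeasurableUpTo ε f μ s :=
  ⟨0, aestronglyMeasurable_const, by simpa using hf⟩

lemma mono (hf : AEStronglyMeasurableUpTo ε f μ s) (hεδ : ε ≤ δ) (hts : t ⊆ s) :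
    AEStronglyMeasurableUpTo δ f μ t := by
  obtain ⟨g, hg, hfg⟩ := hf
  exact ⟨g, hg.mono_set hts, fun u hu => (hfg u (hts hu)).trans hεδ⟩

lemma congr (hf : AEStronglyMeasurableUpTo ε f μ s) (hfg : EqOn f g s) :
    AEStronglyMeasurableUpTo ε g μ s := by
  obtain ⟨h, hh, hfh⟩ := hf
  exact ⟨h, hh, fun u hu => hfg hu ▸ hfh u hu⟩

lemma const_smul_add {𝕜 : Type*} [NormedField 𝕜] [NormedSpace 𝕜 E]
    (hf : AEStronglyMeasurableUpTo ε f μ s) (c : 𝕜) (hq : AEStronglyMeasurable q (μ.restrict s)) :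
    AEStronglyMeasurableUpTo (‖c‖ * ε) (fun u => c • f u + q u) μ s := by
  obtain ⟨g, hg, hfg⟩ := hf
  refine ⟨fun u => c • g u + q u, (hg.const_smul c).add hq, fun u hu => ?_⟩
  rw [add_sub_add_right_eq_sub, ← smul_sub, norm_smul]
  exact mul_le_mul_of_nonneg_left (hfg u hu) (norm_nonneg c)

lemma union (hs : MeasurableSet s) (hfs : AEStronglyMeasurableUpTo ε f μ s)
    (hft : AEStronglyMeasurableUpTo ε f μ t) : AEStronglyMeasurableUpTo ε f μ (s ∪ t) := by
  classical
  obtain ⟨g, hg, hfg⟩ := hfs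
  obtain ⟨h, hh, hfh⟩ := hft
  refine ⟨s.piecewise g h, .piecewise hs ?_ ?_, fun u hu => ?_⟩
  · rwa [Measure.restrict_restrict hs, inter_eq_left.mpr subset_union_left]
  · rw [Measure.restrict_restrict hs.compl]
    exact hh.mono_set fun u hu => hu.2.resolve_left hu.1
  · by_cases hus : u ∈ s
    · simpa only [piecewise_eq_of_mem _ _ _ hus] using hfg u hus
    · simpa only [piecewise_eq_of_notMem _ _ _ hus] using hfh u (hu.resolve_left hus)

lemma Ico_of_forall_Ico_succ {ν : Measure ℝ} {f : ℝ → E} {x : ℕ → ℝ} {N : ℕ}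
    (hf : ∀ i < N, AEStronglyMeasurableUpTo ε f ν (Ico (x i) (x (i + 1)))) :
    AEStronglyMeasurableUpTo ε f ν (Ico (x 0) (x N)) := by
  induction N with
  | zero => exact .of_norm_le (by simp)
  | succ n ih =>
    exact ((ih fun i hi => hf i (by lia)).union measurableSet_Ico (hf n n.lt_succ_self)).mono
      le_rfl Ico_subset_Ico_union_Ico

lemma aestronglyMeasurable_of_tendsto {δ : ℕ → ℝ} (hs : MeasurableSet s)
    (hf : ∀ n, AEStronglyMeasurableUpTo (δ n) f μ s) (hδ : Tendsto δ atTop (𝓝 0)) :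
    AEStronglyMeasurable f (μ.restrict s) := by
  choose g hg hfg using hf
  refine aestronglyMeasurable_of_tendsto_ae atTop hg ?_
  filter_upwards [ae_restrict_mem hs] with u hu
  rw [tendsto_iff_norm_sub_tendsto_zero]
  exact squeeze_zero (fun n => norm_nonneg _)
    (fun n => (norm_sub_rev _ _).trans_le (hfg n u hu)) hδ

end AEStronglyMeasurableUpTo

end Approximation

section Affine

variable {E : Type*} [NormedAddCommGroup E] {a : ℝ}

lemma quasiMeasurePreserving_inv_mul_sub (ha : a ≠ 0) (b : ℝ) :
    Measure.QuasiMeasurePreserving fun t : ℝ => a⁻¹ * (t - b) := by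
  have h_mul : Measure.QuasiMeasurePreserving fun t : ℝ => a⁻¹ * t := by
    refine ⟨measurable_const_mul _, ?_⟩
    rw [Real.map_volume_mul_left (inv_ne_zero ha)]
    exact Measure.smul_absolutelyContinuous
  exact h_mul.comp (measurePreserving_sub_right volume b).quasiMeasurePreserving

lemma AEStronglyMeasurableUpTo.of_comp_affine {ε : ℝ} {f : ℝ → E} {s : Set ℝ} (ha : a ≠ 0) (b : ℝ)
    (hf : AEStronglyMeasurableUpTo ε (fun u => f (a * u + b)) volume s) :
    AEStronglyMeasurableUpTo ε f volume ((fun u => a * u + b) '' s) := by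
  obtain ⟨g, hg, hfg⟩ := hf
  have h_left_inv (u : ℝ) : a⁻¹ * (a * u + b - b) = u := by field_simp; ring
  have h_maps : MapsTo (fun t => a⁻¹ * (t - b)) ((fun u => a * u + b) '' s) s := by
    rintro _ ⟨u, hu, rfl⟩
    simpa only [h_left_inv] using hu
  refine ⟨fun t => g (a⁻¹ * (t - b)), hg.comp_quasiMeasurePreserving
    ((quasiMeasurePreserving_inv_mul_sub ha b).restrict h_maps), ?_⟩
  rintro _ ⟨u, hu, rfl⟩
  simpa only [h_left_inv] using hfg u hu

lemma intervalIntegrable_of_comp_affine {f : ℝ → E} {b c d : ℝ} (ha : a ≠ 0)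
    (hf : IntervalIntegrable (fun u => f (a * u + b)) volume c d) :
    IntervalIntegrable f volume (a * c + b) (a * d + b) := by
  simpa [mul_inv_cancel_left₀ ha, mul_comm a] using
    (hf.comp_mul_left (c := a⁻¹)).comp_sub_right b

end Affine

section TruncatedFourier

variable {E : Type*} [NormedAddCommGroup E] [NormedSpace ℂ E] {c d : ℝ} {f g : ℝ → E}

/-- The Fourier-type transform `∫ e^{jst} f(t) dt` over `[c, d]`, allowing a complex frequency `s`.
No sign and no factor `2π` are put in the exponent. -/
noncomputable def truncatedFourier (c d : ℝ) (f : ℝ → E) (s : ℂ) : E :=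
  ∫ t in c..d, Complex.exp (s * t * Complex.I) • f t

lemma intervalIntegrable_cexp_smul (hf : IntervalIntegrable f volume c d) (s : ℂ) :
    IntervalIntegrable (fun t : ℝ => Complex.exp (s * t * Complex.I) • f t) volume c d :=
  hf.continuousOn_smul (by fun_prop)

lemma truncatedFourier_congr (hcd : c ≤ d) (hfg : EqOn f g (Ico c d)) (s : ℂ) :
    truncatedFourier c d f s = truncatedFourier c d g s :=
  intervalIntegral.integral_congr_Ioo_of_le hcd fun t ht => by
    simp only [hfg (Ioo_subset_Ico_self ht)]

lemma truncatedFourier_const_smul_add (hf : IntervalIntegrable f volume c d)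
    (hg : IntervalIntegrable g volume c d) (α s : ℂ) :
    truncatedFourier c d (fun t => α • f t + g t) s =
      α • truncatedFourier c d f s + truncatedFourier c d g s := by
  simp only [truncatedFourier, smul_add, smul_comm _ α]
  rw [← intervalIntegral.integral_smul]
  exact intervalIntegral.integral_add ((intervalIntegrable_cexp_smul hf s).smul α)
    (intervalIntegrable_cexp_smul hg s)

lemma truncatedFourier_affine (a b c d : ℝ) (f : ℝ → E) (s : ℂ) :
    truncatedFourier (a * c + b) (a * d + b) f s =
      (a * Complex.exp (s * b * Complex.I)) •
        truncatedFourier c d (fun u => f (a * u + b)) (a * s) := by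
  have h_exp (u : ℝ) : Complex.exp (s * (a * u + b : ℝ) * Complex.I) =
      Complex.exp (s * b * Complex.I) * Complex.exp (a * s * u * Complex.I) := by
    rw [← Complex.exp_add]
    push_cast
    ring_nf
  simp only [truncatedFourier, ← intervalIntegral.smul_integral_comp_mul_add, h_exp, mul_smul,
    intervalIntegral.integral_smul, Complex.coe_smul]

lemma truncatedFourier_eq_sum_adjacent {x : ℕ → ℝ} {N : ℕ}
    (hf : ∀ i < N, IntervalIntegrable f volume (x i) (x (i + 1))) (s : ℂ) :
    truncatedFourier (x 0) (x N) f s =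
      ∑ i ∈ Finset.range N, truncatedFourier (x i) (x (i + 1)) f s :=
  (intervalIntegral.sum_integral_adjacent_intervals fun i hi =>
    intervalIntegrable_cexp_smul (hf i hi) s).symm

end TruncatedFourier

section Partition

variable {E : Type*} [NormedAddCommGroup E] {x : ℕ → ℝ} {N i : ℕ}

lemma apply_zero_lt_apply_of_lt_succ (hx : ∀ i < N, x i < x (i + 1)) (hN : 0 < N) : x 0 < x N :=
  strictMonoOn_Iic_of_lt_succ hx N.zero_le self_mem_Iic hN

lemma aC_pos (hx : ∀ i < N, x i < x (i + 1)) (hi : i < N) : 0 < aC x N i :=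
  div_pos (sub_pos.mpr (hx i hi)) (sub_pos.mpr (apply_zero_lt_apply_of_lt_succ hx hi.pos))

lemma aC_mul_left_add_bC (hx : x 0 < x N) (i : ℕ) : aC x N i * x 0 + bC x N i = x i := by
  have : x N - x 0 ≠ 0 := (sub_pos.mpr hx).ne'
  unfold aC bC
  field_simp
  ring

lemma aC_mul_right_add_bC (hx : x 0 < x N) (i : ℕ) : aC x N i * x N + bC x N i = x (i + 1) := by
  have : x N - x 0 ≠ 0 := (sub_pos.mpr hx).ne'
  unfold aC bC
  field_simp
  ring

lemma image_Lm_Ico (hx : ∀ i < N, x i < x (i + 1)) (hi : i < N) :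
    Lm x N i '' Ico (x 0) (x N) = Ico (x i) (x (i + 1)) := by
  have h := apply_zero_lt_apply_of_lt_succ hx hi.pos
  exact (image_affine_Ico (aC_pos hx hi) (bC x N i) (x 0) (x N)).trans
    (by rw [aC_mul_left_add_bC h, aC_mul_right_add_bC h])

lemma LmInv_Lm (ha : aC x N i ≠ 0) (u : ℝ) : LmInv x N i (Lm x N i u) = u := by
  unfold LmInv Lm
  field_simp
  ring

lemma intervalIntegrable_of_comp_Lm (hx : ∀ i < N, x i < x (i + 1)) (hi : i < N) {f p : ℝ → E}
    (hp : IntervalIntegrable p volume (x 0) (x N))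
    (hfp : ∀ u ∈ Ico (x 0) (x N), f (Lm x N i u) = p u) :
    IntervalIntegrable f volume (x i) (x (i + 1)) := by
  have h := apply_zero_lt_apply_of_lt_succ hx hi.pos
  have h_comp : IntervalIntegrable (fun u => f (Lm x N i u)) volume (x 0) (x N) :=
    hp.congr_uIoo fun u hu => (hfp u (Ioo_subset_Ico_self (uIoo_of_le h.le ▸ hu))).symm
  simpa only [aC_mul_left_add_bC h, aC_mul_right_add_bC h] using
    intervalIntegrable_of_comp_affine (aC_pos hx hi).ne' h_comp

lemma truncatedFourier_eq_sum_of_comp_Lm [NormedSpace ℂ E] (hx : ∀ i < N, x i < x (i + 1))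
    {f : ℝ → E} {p : ℕ → ℝ → E} (hp : ∀ i < N, IntervalIntegrable (p i) volume (x 0) (x N))
    (hfp : ∀ i < N, ∀ u ∈ Ico (x 0) (x N), f (Lm x N i u) = p i u) (s : ℂ) :
    truncatedFourier (x 0) (x N) f s =
      ∑ i ∈ Finset.range N, (aC x N i * Complex.exp (s * bC x N i * Complex.I)) •
        truncatedFourier (x 0) (x N) (p i) (aC x N i * s) := by
  rw [truncatedFourier_eq_sum_adjacent
    fun i hi => intervalIntegrable_of_comp_Lm hx hi (hp i hi) (hfp i hi)]
  refine Finset.sum_congr rfl fun i hi => ?_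
  rw [Finset.mem_range] at hi
  have h := apply_zero_lt_apply_of_lt_succ hx hi.pos
  rw [← truncatedFourier_congr h.le (hfp i hi)]
  simpa only [Lm, aC_mul_left_add_bC h, aC_mul_right_add_bC h] using
    truncatedFourier_affine (aC x N i) (bC x N i) (x 0) (x N) f s

end Partition

lemma exists_lt_one_forall_norm_le {ι G : Type*} [SeminormedAddGroup G] {s : Finset ι} {g : ι → G}
    (hg : ∀ i ∈ s, ‖g i‖ < 1) : ∃ c : ℝ, 0 ≤ c ∧ c < 1 ∧ ∀ i ∈ s, ‖g i‖ ≤ c := by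
  refine ⟨(s.sup fun i => ‖g i‖₊ : NNReal), NNReal.coe_nonneg _, ?_, fun i hi => ?_⟩
  · rwa [← NNReal.coe_one, NNReal.coe_lt_coe, Finset.sup_lt_iff zero_lt_one]
  · exact NNReal.coe_le_coe.mpr (Finset.le_sup (f := fun i => ‖g i‖₊) hi)

section FractalFunction

variable {𝕜 E : Type*} [NormedField 𝕜] [NormedAddCommGroup E] [NormedSpace 𝕜 E]
  {x : ℕ → ℝ} {N : ℕ} {α : ℕ → 𝕜} {q : ℕ → ℝ → E} {f : ℝ → E}

lemma AEStronglyMeasurableUpTo.mul_of_fixedPoint (hx : ∀ i < N, x i < x (i + 1)) {c ε : ℝ}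
    (hα : ∀ i < N, ‖α i‖ ≤ c) (hε : 0 ≤ ε)
    (hq : ∀ i < N, AEStronglyMeasurable (q i) (volume.restrict (Ico (x 0) (x N))))
    (hfe : ∀ i < N, ∀ t ∈ Ico (x 0) (x N), f (Lm x N i t) = α i • f t + q i t)
    (hf : AEStronglyMeasurableUpTo ε f volume (Ico (x 0) (x N))) :
    AEStronglyMeasurableUpTo (c * ε) f volume (Ico (x 0) (x N)) := by
  refine .Ico_of_forall_Ico_succ fun i hi => ?_
  have h_comp := (hf.const_smul_add (α i) (hq i hi)).congr fun u hu => (hfe i hi u hu).symm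
  have h_piece := h_comp.of_comp_affine (aC_pos hx hi).ne' (bC x N i)
  exact h_piece.mono (mul_le_mul_of_nonneg_right (hα i hi) hε) (image_Lm_Ico hx hi).ge

lemma aestronglyMeasurable_of_fixedPoint (hx : ∀ i < N, x i < x (i + 1)) (hα : ∀ i < N, ‖α i‖ < 1)
    (hq : ∀ i < N, AEStronglyMeasurable (q i) (volume.restrict (Ico (x 0) (x N))))
    (hfb : ∃ M, ∀ t ∈ Ico (x 0) (x N), ‖f t‖ ≤ M)
    (hfe : ∀ i < N, ∀ t ∈ Ico (x 0) (x N), f (Lm x N i t) = α i • f t + q i t) :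
    AEStronglyMeasurable f (volume.restrict (Ico (x 0) (x N))) := by
  obtain ⟨M, hM⟩ := hfb
  obtain ⟨c, hc0, hc1, hc⟩ := exists_lt_one_forall_norm_le (s := Finset.range N) (g := α)
    (by simpa only [Finset.mem_range] using hα)
  simp only [Finset.mem_range] at hc
  have h_approx (n : ℕ) :
      AEStronglyMeasurableUpTo (c ^ n * |M|) f volume (Ico (x 0) (x N)) := by
    induction n with
    | zero => exact .of_norm_le fun t ht => by simpa using (hM t ht).trans (le_abs_self M)
    | succ n ih =>
      rw [pow_succ', mul_assoc]
      exact ih.mul_of_fixedPoint hx hc (by positivity) hq hfe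
  refine AEStronglyMeasurableUpTo.aestronglyMeasurable_of_tendsto measurableSet_Ico h_approx ?_
  simpa using (tendsto_pow_atTop_nhds_zero_of_lt_one hc0 hc1).mul_const |M|

lemma intervalIntegrable_of_fixedPoint (hx : ∀ i < N, x i < x (i + 1)) (hα : ∀ i < N, ‖α i‖ < 1)
    (hq : ∀ i < N, IntervalIntegrable (q i) volume (x 0) (x N))
    (hfb : ∃ M, ∀ t ∈ Ico (x 0) (x N), ‖f t‖ ≤ M)
    (hfe : ∀ i < N, ∀ t ∈ Ico (x 0) (x N), f (Lm x N i t) = α i • f t + q i t) :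
    IntervalIntegrable f volume (x 0) (x N) := by
  obtain rfl | hN := N.eq_zero_or_pos
  · exact .refl
  have h := apply_zero_lt_apply_of_lt_succ hx hN
  have hq_meas (i : ℕ) (hi : i < N) :
      AEStronglyMeasurable (q i) (volume.restrict (Ico (x 0) (x N))) :=
    ((intervalIntegrable_iff_integrableOn_Ico_of_le h.le).mp (hq i hi)).aestronglyMeasurable
  have hf_meas := aestronglyMeasurable_of_fixedPoint hx hα hq_meas hfb hfe
  rw [intervalIntegrable_iff_integrableOn_Ico_of_le h.le]
  obtain ⟨M, hM⟩ := hfb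
  exact .of_bound measure_Ico_lt_top hf_meas M <| (ae_restrict_mem measurableSet_Ico).mono hM

end FractalFunction

theorem stmt16_general {E : Type*} [NormedAddCommGroup E] [NormedSpace ℂ E] [CompleteSpace E]
    {N : ℕ} {x : ℕ → ℝ} (hx : ∀ i < N, x i < x (i + 1)) {α : ℕ → ℂ} (hα : ∀ i < N, ‖α i‖ < 1)
    {q : ℕ → ℝ → E} (hq : ∀ i < N, IntervalIntegrable (q i) volume (x 0) (x N))
    {f : ℝ → E} (hfb : ∃ M, ∀ t ∈ Ico (x 0) (x N), ‖f t‖ ≤ M)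
    (hfe : ∀ i < N, ∀ t ∈ Ico (x 0) (x N), f (Lm x N i t) = α i • f t + q i t)
    {Q : ℝ → E} (hQ : ∀ i < N, ∀ t ∈ Ico (x i) (x (i + 1)), Q t = q i (LmInv x N i t)) (s : ℂ) :
    truncatedFourier (x 0) (x N) f s =
      (∑ i ∈ Finset.range N, (aC x N i * α i * Complex.exp (s * bC x N i * Complex.I)) •
        truncatedFourier (x 0) (x N) f (aC x N i * s)) + truncatedFourier (x 0) (x N) Q s := by
  have hf := intervalIntegrable_of_fixedPoint hx hα hq hfb hfe
  have hQ_Lm (i : ℕ) (hi : i < N) (u : ℝ) (hu : u ∈ Ico (x 0) (x N)) :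
      Q (Lm x N i u) = q i u := by
    rw [hQ i hi _ (image_Lm_Ico hx hi ▸ mem_image_of_mem _ hu), LmInv_Lm (aC_pos hx hi).ne']
  have hp (i : ℕ) (hi : i < N) :
      IntervalIntegrable (fun t => α i • f t + q i t) volume (x 0) (x N) :=
    (hf.smul (α i)).add (hq i hi)
  rw [truncatedFourier_eq_sum_of_comp_Lm hx hp hfe,
    truncatedFourier_eq_sum_of_comp_Lm hx hq hQ_Lm, ← Finset.sum_add_distrib]
  refine Finset.sum_congr rfl fun i hi => ?_
  have h_split := truncatedFourier_const_smul_add hf (hq i (Finset.mem_range.mp hi)) (α i)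
    (aC x N i * s)
  rw [h_split, smul_add, smul_smul, mul_right_comm]

lemma intervalIntegrable_ofReal_of_abs_sub_le {q : ℝ → ℝ} {c d : ℝ} (hcd : c ≤ d)
    (hq : ∃ C, ∀ u ∈ Icc c d, ∀ v ∈ Icc c d, |q u - q v| ≤ C * |u - v|) :
    IntervalIntegrable (fun t => (q t : ℂ)) volume c d := by
  obtain ⟨C, hC⟩ := hq
  have hq_cont : ContinuousOn q (Icc c d) := (LipschitzOnWith.of_dist_le' hC).continuousOn
  exact (Complex.continuous_ofReal.comp_continuousOn hq_cont).intervalIntegrable_of_Icc hcd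

/-- Functional equation for the Fourier-type transform of the bounded fractal function:
`f̂(s) = ∑ i a i α i e^{j s b i} f̂(a i s) + Q̂(s)`. -/
theorem stmt16
    (N : ℕ) (hN : 2 ≤ N)
    (x : ℕ → ℝ)
    (hx : ∀ i, i < N → x i < x (i + 1))
    (α : ℕ → ℝ) (hα : ∀ i, i < N → |α i| < 1)
    (q : ℕ → ℝ → ℝ)
    (hq : ∀ i, i < N → ∃ C, ∀ u ∈ Icc (x 0) (x N), ∀ v ∈ Icc (x 0) (x N),
      |q i u - q i v| ≤ C * |u - v|)
    (f : ℝ → ℝ)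
    (hfb : ∃ M, ∀ t ∈ Icc (x 0) (x N), |f t| ≤ M)
    (hfe : ∀ i, i < N → ∀ t ∈ Ico (x 0) (x N), f (Lm x N i t) = α i * f t + q i t)
    (hfeN : f (Lm x N (N - 1) (x N)) = α (N - 1) * f (x N) + q (N - 1) (x N))
    (Qf : ℝ → ℝ)
    (hQf : ∀ i, i < N → ∀ t ∈ Ico (x i) (x (i + 1)), Qf t = q i (LmInv x N i t))
    (hQfN : Qf (x N) = q (N - 1) (LmInv x N (N - 1) (x N))) :
    ∀ s : ℝ,
      ∫ t in (x 0)..(x N), Complex.exp (((s * t : ℝ) : ℂ) * Complex.I) * ((f t : ℝ) : ℂ) =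
        (∑ i ∈ Finset.range N,
          ((aC x N i : ℝ) : ℂ) * ((α i : ℝ) : ℂ) *
            Complex.exp (((s * bC x N i : ℝ) : ℂ) * Complex.I) *
            ∫ t in (x 0)..(x N),
              Complex.exp (((aC x N i * s * t : ℝ) : ℂ) * Complex.I) * ((f t : ℝ) : ℂ)) +
        ∫ t in (x 0)..(x N), Complex.exp (((s * t : ℝ) : ℂ) * Complex.I) * ((Qf t : ℝ) : ℂ) := by
  intro s
  have h := apply_zero_lt_apply_of_lt_succ hx (by lia)
  simpa [truncatedFourier] using stmt16_general hx (α := fun i => (α i : ℂ)) (by simpa using hα)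
    (fun i hi => intervalIntegrable_ofReal_of_abs_sub_le h.le (hq i hi)) (f := fun t => (f t : ℂ))
    (hfb.imp fun M hM t ht => by simpa using hM t (Ico_subset_Icc_self ht))
    (fun i hi t ht => by simp [hfe i hi t ht]) (Q := fun t => (Qf t : ℂ))
    (fun i hi t ht => by simp [hQf i hi t ht]) s
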